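/- arXiv:2102.12931 — 3 statements merged into one kernel-verified Lean document; each statement's English description precedes it below -/
import Mathlib

section
/- Let G be a discrete groupoid. Then the set K_fin(G) of all finite local bisections of G, under the setwise product, is a Boolean inverse semigroup whose idempotents are exactly the finite subsets of the set of identities of G. -/
namespace Paper

/-- An inverse semigroup with zero: an associative multiplication, a zero that is
absorbing, and a map `⁻¹` sending each element to its unique generalized inverse. -/
class IsInverseSemigroup (S : Type*) [Mul S] [Zero S] [Inv S] : Prop where
  mul_assoc : ∀ a b c : S, a * b * c = a * (b * c)
  mul_inv_mul : ∀ a : S, a * a⁻¹ * a = a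
  inv_mul_inv : ∀ a : S, a⁻¹ * a * a⁻¹ = a⁻¹
  inv_unique : ∀ a b : S, a * b * a = a → b * a * b = b → b = a⁻¹
  zero_mul : ∀ a : S, 0 * a = 0
  mul_zero : ∀ a : S, a * 0 = 0

variable {S : Type*} [Mul S] [Zero S] [Inv S]

/-- The natural partial order: `a ≤ b` iff `a = b * a⁻¹ * a`. -/
def nle (a b : S) : Prop := a = b * a⁻¹ * a

/-- `e` is an idempotent. -/
def idem (e : S) : Prop := e * e = e

/-- `a` and `b` are compatible. -/
def compat (a b : S) : Prop := idem (a⁻¹ * b) ∧ idem (a * b⁻¹)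

/-- `a` and `b` are orthogonal. -/
def orth (a b : S) : Prop := a⁻¹ * b = 0 ∧ a * b⁻¹ = 0

/-- `j` is the least upper bound of `a` and `b` for the natural partial order. -/
def isJoin (a b j : S) : Prop :=
  nle a j ∧ nle b j ∧ ∀ c : S, nle a c → nle b c → nle j c

/-- `m` is the greatest lower bound of `a` and `b` for the natural partial order. -/
def isMeet (a b m : S) : Prop :=
  nle m a ∧ nle m b ∧ ∀ c : S, nle c a → nle c b → nle c m

/-- `a` is an atom: a nonzero element with nothing strictly between it and `0`. -/
def isAtomElem (a : S) : Prop := a ≠ 0 ∧ ∀ x : S, nle x a → x = a ∨ x = 0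

/-- `s` is the least upper bound of the finite family `f`. -/
def isJoinFin {m : ℕ} (f : Fin m → S) (s : S) : Prop :=
  (∀ i, nle (f i) s) ∧ ∀ c : S, (∀ i, nle (f i) c) → nle s c

/-- A Boolean inverse semigroup: a nonzero inverse semigroup with zero in which
compatible pairs have joins, multiplication distributes over binary compatible joins,
and the idempotents form a generalized Boolean algebra under the natural partial
order (meets of idempotents are automatically given by multiplication; the extra
requirement is the existence of relative complements). -/
class IsBooleanInverseSemigroup (S : Type*) [Mul S] [Zero S] [Inv S]
    extends IsInverseSemigroup S : Prop where
  exists_ne_zero : ∃ a : S, a ≠ 0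
  compat_join : ∀ a b : S, compat a b → ∃ j, isJoin a b j
  mul_join : ∀ a b j c : S, isJoin a b j → isJoin (c * a) (c * b) (c * j)
  join_mul : ∀ a b j c : S, isJoin a b j → isJoin (a * c) (b * c) (j * c)
  relcomp : ∀ e f : S, idem e → idem f → nle f e →
    ∃ g : S, idem g ∧ nle g e ∧ g * f = 0 ∧ isJoin f g e


open CategoryTheory

universe u v

/-- The elements of a (discrete) groupoid with object type `Ob`: arrows together
with their source and target. The source of an arrow is its domain `d` and the
target is its range `r` (so the product `x · y` is defined when `d(x) = r(y)`). -/
def Arr (Ob : Type u) [Groupoid.{v} Ob] : Type (max u v) := Σ (a b : Ob), a ⟶ b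

/-- `IsComp x y z` says that `x` and `y` are composable (`d(x) = r(y)`) with
product `x · y = z`. -/
def IsComp {Ob : Type u} [Groupoid.{v} Ob] (x y z : Arr Ob) : Prop :=
  ∃ (a b c : Ob) (g : a ⟶ b) (h : b ⟶ c),
    y = ⟨a, b, g⟩ ∧ x = ⟨b, c, h⟩ ∧ z = ⟨a, c, g ≫ h⟩

/-- A local bisection: elements with equal domains are equal, and elements with
equal ranges are equal. -/
def IsLocalBisection {Ob : Type u} [Groupoid.{v} Ob] (A : Set (Arr Ob)) : Prop :=
  ∀ x ∈ A, ∀ y ∈ A, (x.1 = y.1 → x = y) ∧ (x.2.1 = y.2.1 → x = y)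

/-- The setwise product of two subsets of a groupoid. -/
def setMul {Ob : Type u} [Groupoid.{v} Ob] (A B : Set (Arr Ob)) : Set (Arr Ob) :=
  {z | ∃ x ∈ A, ∃ y ∈ B, IsComp x y z}

/-- The inverse of a groupoid element. -/
def arrInv {Ob : Type u} [Groupoid.{v} Ob] (x : Arr Ob) : Arr Ob :=
  ⟨x.2.1, x.1, Groupoid.inv x.2.2⟩

/-- The setwise inverse of a subset of a groupoid. -/
def setInv {Ob : Type u} [Groupoid.{v} Ob] (A : Set (Arr Ob)) : Set (Arr Ob) :=
  arrInv '' A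

/-- The set of identities of the groupoid. -/
def identityArrs (Ob : Type u) [Groupoid.{v} Ob] : Set (Arr Ob) :=
  {x | ∃ a : Ob, x = ⟨a, a, 𝟙 a⟩}

/-- `K_fin(G)`: the finite local bisections of the groupoid. -/
def Kfin (Ob : Type u) [Groupoid.{v} Ob] : Type (max u v) :=
  {A : Set (Arr Ob) // A.Finite ∧ IsLocalBisection A}

section Helpers

variable {Ob : Type u} [Groupoid.{v} Ob]

/-- identity arrow -/
def idA (a : Ob) : Arr Ob := ⟨a, a, 𝟙 a⟩

theorem arr_mk_inj {a b : Ob} {g h : a ⟶ b}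
    (e : (⟨a, b, g⟩ : Arr Ob) = ⟨a, b, h⟩) : g = h := by
  injection e with _ e
  injection e with _ e

theorem IsComp.dom {x y z : Arr Ob} (h : IsComp x y z) : z.1 = y.1 := by
  obtain ⟨a, b, c, g, k, rfl, rfl, rfl⟩ := h; rfl

theorem IsComp.ran {x y z : Arr Ob} (h : IsComp x y z) : z.2.1 = x.2.1 := by
  obtain ⟨a, b, c, g, k, rfl, rfl, rfl⟩ := h; rfl

theorem IsComp.mid {x y z : Arr Ob} (h : IsComp x y z) : x.1 = y.2.1 := by
  obtain ⟨a, b, c, g, k, rfl, rfl, rfl⟩ := h; rfl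

theorem exists_comp {x y : Arr Ob} (h : x.1 = y.2.1) : ∃ z, IsComp x y z := by
  obtain ⟨a, b, f⟩ := x
  obtain ⟨c, d, g⟩ := y
  dsimp at h
  subst h
  exact ⟨⟨c, b, g ≫ f⟩, c, a, b, g, f, rfl, rfl, rfl⟩

theorem IsComp.unique {x y z w : Arr Ob} (h : IsComp x y z) (h' : IsComp x y w) : z = w := by
  obtain ⟨a, b, c, g, k, rfl, rfl, rfl⟩ := h
  obtain ⟨a', b', c', g', k', h1, h2, rfl⟩ := h'
  cases h1
  cases h2
  rfl

theorem IsComp.assoc {x y z w t : Arr Ob} (h : IsComp x y w) (h' : IsComp w z t) :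
    ∃ s, IsComp y z s ∧ IsComp x s t := by
  obtain ⟨a, b, c, g, k, rfl, rfl, rfl⟩ := h
  obtain ⟨a', b', c', g', k', rfl, h2, rfl⟩ := h'
  cases h2
  exact ⟨_, ⟨_, _, _, g', g, rfl, rfl, rfl⟩, _, _, _, g' ≫ g, k, rfl, rfl, by simp; rfl⟩

theorem IsComp.assoc' {x y z s t : Arr Ob} (h : IsComp y z s) (h' : IsComp x s t) :
    ∃ w, IsComp x y w ∧ IsComp w z t := by
  obtain ⟨a, b, c, g, k, rfl, rfl, rfl⟩ := h
  obtain ⟨a', b', c', g', k', h2, rfl, rfl⟩ := h'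
  cases h2
  exact ⟨_, ⟨_, _, _, k, k', rfl, rfl, rfl⟩, _, _, _, g, k ≫ k', rfl, rfl, by simp; rfl⟩

theorem comp_id (x : Arr Ob) : IsComp x (idA x.1) x := by
  obtain ⟨a, b, f⟩ := x
  exact ⟨a, a, b, 𝟙 a, f, rfl, rfl, by simp; rfl⟩

theorem comp_inv (x : Arr Ob) : IsComp x (arrInv x) (idA x.2.1) := by
  obtain ⟨a, b, f⟩ := x
  exact ⟨b, a, b, Groupoid.inv f, f, rfl, rfl, by simp [idA]; rfl⟩

theorem inv_comp (x : Arr Ob) : IsComp (arrInv x) x (idA x.1) := by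
  obtain ⟨a, b, f⟩ := x
  exact ⟨a, b, a, f, Groupoid.inv f, rfl, rfl, by simp [idA]; rfl⟩

theorem inv_inv (x : Arr Ob) : arrInv (arrInv x) = x := by
  obtain ⟨a, b, f⟩ := x
  simp [arrInv]; rfl

theorem IsComp.eq_id {x z : Arr Ob} (h : IsComp x x z) (e : z = x) : x = idA x.1 := by
  obtain ⟨a, b, c, g, k, h1, h2, rfl⟩ := h
  subst h1
  cases h2
  have h3 : g ≫ g = g := arr_mk_inj e
  have : g = 𝟙 a := by rw [← cancel_epi g]; simpa using h3
  rw [this]; rfl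

/-- if x * y is an identity then x is the inverse of y -/
theorem IsComp.eq_inv {x y : Arr Ob} {a : Ob} (h : IsComp x y (idA a)) : x = arrInv y := by
  obtain ⟨a, b, c, g, k, rfl, rfl, h3⟩ := h
  have e1 := congrArg (fun x : Arr Ob => x.1) h3
  have e2 := congrArg (fun x : Arr Ob => x.2.1) h3
  dsimp [idA] at e1 e2
  subst e1
  subst e2
  have h5 := arr_mk_inj h3
  have : k = Groupoid.inv g := by rw [← cancel_epi g]; simp [← h5]
  rw [this]; rfl

/-- y * x * y = y gives y = x⁻¹ -/
theorem comp_comp_eq_inv {x y w : Arr Ob} (h : IsComp y x w) (h' : IsComp w y y) :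
    y = arrInv x := by
  have hw : w = idA y.2.1 := by
    obtain ⟨t, ht, ht'⟩ := h'.assoc (comp_inv y)
    have := ht.unique (comp_inv y)
    subst this
    have e2 : w.1 = y.2.1 := h'.mid
    have := ht'.unique (e2 ▸ comp_id w)
    exact this.symm
  subst hw
  exact h.eq_inv

theorem setMul_assoc (A B C : Set (Arr Ob)) :
    setMul (setMul A B) C = setMul A (setMul B C) := by
  ext t
  constructor
  · rintro ⟨w, ⟨x, hx, y, hy, h⟩, z, hz, h'⟩
    obtain ⟨s, h1, h2⟩ := h.assoc h'
    exact ⟨x, hx, s, ⟨y, hy, z, hz, h1⟩, h2⟩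
  · rintro ⟨x, hx, s, ⟨y, hy, z, hz, h⟩, h'⟩
    obtain ⟨w, h1, h2⟩ := h.assoc' h'
    exact ⟨w, ⟨x, hx, y, hy, h1⟩, z, hz, h2⟩

theorem setInv_setInv (A : Set (Arr Ob)) : setInv (setInv A) = A := by
  simp [setInv, Set.image_image, inv_inv]

theorem bis_inv {A : Set (Arr Ob)} (hA : IsLocalBisection A) : IsLocalBisection (setInv A) := by
  rintro _ ⟨x, hx, rfl⟩ _ ⟨y, hy, rfl⟩
  exact ⟨fun h => congrArg _ ((hA x hx y hy).2 h), fun h => congrArg _ ((hA x hx y hy).1 h)⟩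

theorem bis_mul {A B : Set (Arr Ob)} (hA : IsLocalBisection A) (hB : IsLocalBisection B) :
    IsLocalBisection (setMul A B) := by
  rintro z ⟨x, hx, y, hy, h⟩ z' ⟨x', hx', y', hy', h'⟩
  constructor
  · intro e
    have e1 : y = y' := (hB y hy y' hy').1 (by rw [← h.dom, e, h'.dom])
    subst e1
    have e2 : x = x' := (hA x hx x' hx').1 (by rw [h.mid, h'.mid])
    subst e2
    exact h.unique h'
  · intro e
    have e2 : x = x' := (hA x hx x' hx').2 (by rw [← h.ran, e, h'.ran])
    subst e2
    have e1 : y = y' := (hB y hy y' hy').2 (by rw [← h.mid, h'.mid])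
    subst e1
    exact h.unique h'

theorem fin_mul {A B : Set (Arr Ob)} (hA : A.Finite) (hB : B.Finite) :
    (setMul A B).Finite := by
  have : setMul A B = ⋃ x ∈ A, ⋃ y ∈ B, {z | IsComp x y z} := by
    ext z; simp [setMul]
  rw [this]
  refine hA.biUnion fun x _ => hB.biUnion fun y _ => Set.Subsingleton.finite ?_
  intro z hz w hw
  exact IsComp.unique hz hw

theorem restrict {A : Set (Arr Ob)} (B : Set (Arr Ob)) (hA : IsLocalBisection A) :
    setMul (setMul B (setInv A)) A = {b | b ∈ B ∧ ∃ a ∈ A, a.1 = b.1} := by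
  rw [setMul_assoc]
  ext t
  constructor
  · rintro ⟨b, hb, s, ⟨_, ⟨x, hx, rfl⟩, y, hy, h⟩, h'⟩
    have e : x = y := (hA x hx y hy).2 h.mid
    subst e
    have := h.unique (inv_comp x)
    subst this
    have e2 : b.1 = x.1 := h'.mid
    have := h'.unique (e2 ▸ comp_id b)
    subst this
    exact ⟨hb, x, hx, e2.symm⟩
  · rintro ⟨hb, a, ha, e⟩
    exact ⟨t, hb, _, ⟨_, ⟨a, ha, rfl⟩, a, ha, inv_comp a⟩, e ▸ comp_id t⟩

theorem nle_iff_set {A B : Set (Arr Ob)} (hA : IsLocalBisection A) (hB : IsLocalBisection B) :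
    A = setMul (setMul B (setInv A)) A ↔ A ⊆ B := by
  rw [restrict B hA]
  constructor
  · intro h x hx
    rw [h] at hx
    exact hx.1
  · intro h
    ext x
    constructor
    · intro hx; exact ⟨h hx, x, hx, rfl⟩
    · rintro ⟨hx, a, ha, e⟩
      rw [← (hB a (h ha) x hx).1 e]; exact ha

theorem sub_inv {A B : Set (Arr Ob)} (hB : IsLocalBisection B)
    (h : setMul (setMul B A) B = B) : B ⊆ setInv A := by
  intro y hy
  have hy' := hy
  rw [← h] at hy'
  obtain ⟨w, ⟨y1, hy1, x, hx, h1⟩, y2, hy2, h2⟩ := hy'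
  have e2 : y = y2 := (hB _ hy _ hy2).1 h2.dom
  have e1 : y = y1 := (hB _ hy _ hy1).2 (by rw [h2.ran, h1.ran])
  subst e2
  subst e1
  exact ⟨x, hx, (comp_comp_eq_inv h1 h2).symm⟩

theorem idem_iff_set {A : Set (Arr Ob)} (hA : IsLocalBisection A) :
    setMul A A = A ↔ A ⊆ identityArrs Ob := by
  constructor
  · intro h x hx
    have hx' := hx
    rw [← h] at hx'
    obtain ⟨x1, h1, x2, h2, hc⟩ := hx'
    have e2 : x = x2 := (hA _ hx _ h2).1 hc.dom
    have e1 : x = x1 := (hA _ hx _ h1).2 hc.ran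
    subst e2
    subst e1
    exact ⟨_, hc.eq_id rfl⟩
  · intro h
    ext z
    constructor
    · rintro ⟨x, hx, y, hy, hc⟩
      obtain ⟨a, rfl⟩ := h hy
      have e : x.1 = a := hc.mid
      subst e
      rw [hc.unique (comp_id x)]
      exact hx
    · intro hz
      refine ⟨z, hz, z, hz, ?_⟩
      obtain ⟨a, rfl⟩ := h hz
      exact comp_id (idA a)

theorem union_bis {A B : Set (Arr Ob)} (hA : IsLocalBisection A) (hB : IsLocalBisection B)
    (h1 : setMul (setInv A) B ⊆ identityArrs Ob) (h2 : setMul A (setInv B) ⊆ identityArrs Ob) :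
    IsLocalBisection (A ∪ B) := by
  have key : ∀ x ∈ A, ∀ y ∈ B, (x.1 = y.1 → x = y) ∧ (x.2.1 = y.2.1 → x = y) := by
    intro x hx y hy
    constructor
    · intro e
      obtain ⟨z, hz⟩ := exists_comp (x := x) (y := arrInv y) e
      obtain ⟨a, rfl⟩ := h2 ⟨x, hx, _, ⟨y, hy, rfl⟩, hz⟩
      rw [IsComp.eq_inv hz, inv_inv]
    · intro e
      obtain ⟨z, hz⟩ := exists_comp (x := arrInv x) (y := y) e
      obtain ⟨a, rfl⟩ := h1 ⟨_, ⟨x, hx, rfl⟩, y, hy, hz⟩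
      rw [← inv_inv x, IsComp.eq_inv hz, inv_inv]
  rintro x (hx | hx) y (hy | hy)
  · exact hA x hx y hy
  · exact key x hx y hy
  · exact ⟨fun e => ((key y hy x hx).1 e.symm).symm, fun e => ((key y hy x hx).2 e.symm).symm⟩
  · exact hB x hx y hy

theorem bis_mono {A B : Set (Arr Ob)} (h : A ⊆ B) (hB : IsLocalBisection B) :
    IsLocalBisection A := fun x hx y hy => hB x (h hx) y (h hy)

theorem setMul_union (A B C : Set (Arr Ob)) :
    setMul C (A ∪ B) = setMul C A ∪ setMul C B := by
  ext z
  constructor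
  · rintro ⟨x, hx, y, hy | hy, h⟩
    · exact Or.inl ⟨x, hx, y, hy, h⟩
    · exact Or.inr ⟨x, hx, y, hy, h⟩
  · rintro (⟨x, hx, y, hy, h⟩ | ⟨x, hx, y, hy, h⟩)
    · exact ⟨x, hx, y, Or.inl hy, h⟩
    · exact ⟨x, hx, y, Or.inr hy, h⟩

theorem union_setMul (A B C : Set (Arr Ob)) :
    setMul (A ∪ B) C = setMul A C ∪ setMul B C := by
  ext z
  constructor
  · rintro ⟨x, hx | hx, y, hy, h⟩
    · exact Or.inl ⟨x, hx, y, hy, h⟩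
    · exact Or.inr ⟨x, hx, y, hy, h⟩
  · rintro (⟨x, hx, y, hy, h⟩ | ⟨x, hx, y, hy, h⟩)
    · exact ⟨x, Or.inl hx, y, hy, h⟩
    · exact ⟨x, Or.inr hx, y, hy, h⟩

instance kMul : Mul (Kfin Ob) :=
  ⟨fun A B => ⟨setMul A.val B.val, fin_mul A.2.1 B.2.1, bis_mul A.2.2 B.2.2⟩⟩

instance kZero : Zero (Kfin Ob) :=
  ⟨⟨∅, Set.finite_empty, fun _ h => h.elim⟩⟩

instance kInv : Inv (Kfin Ob) :=
  ⟨fun A => ⟨setInv A.val, A.2.1.image _, bis_inv A.2.2⟩⟩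

theorem kext {A B : Kfin Ob} : A = B ↔ A.val = B.val := Subtype.ext_iff

theorem kmul_val (A B : Kfin Ob) : (A * B).val = setMul A.val B.val := rfl
theorem kinv_val (A : Kfin Ob) : (A⁻¹).val = setInv A.val := rfl
theorem kzero_val : (0 : Kfin Ob).val = ∅ := rfl

theorem knle {A B : Kfin Ob} : nle A B ↔ A.val ⊆ B.val := by
  rw [← nle_iff_set A.2.2 B.2.2]; exact kext

theorem kidem {A : Kfin Ob} : idem A ↔ A.val ⊆ identityArrs Ob := by
  rw [← idem_iff_set A.2.2]; exact kext

theorem kjoin {A B J : Kfin Ob} : isJoin A B J ↔ J.val = A.val ∪ B.val := by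
  unfold isJoin
  simp only [knle]
  constructor
  · rintro ⟨h1, h2, h3⟩
    have hs := Set.union_subset h1 h2
    refine Set.Subset.antisymm ?_ hs
    exact h3 ⟨A.val ∪ B.val, A.2.1.union B.2.1, bis_mono hs J.2.2⟩
      Set.subset_union_left Set.subset_union_right
  · intro h
    rw [h]
    exact ⟨Set.subset_union_left, Set.subset_union_right, fun c => Set.union_subset⟩

theorem kself (A : Kfin Ob) : A * A⁻¹ * A = A :=
  ((knle (A := A) (B := A)).2 (Set.Subset.refl _)).symm

theorem kinvinv (A : Kfin Ob) : A⁻¹⁻¹ = A := kext.2 (setInv_setInv _)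

theorem kBool [Nonempty Ob] : IsBooleanInverseSemigroup (Kfin Ob) where
  mul_assoc a b c := kext.2 (setMul_assoc _ _ _)
  mul_inv_mul := kself
  inv_mul_inv a := by simpa only [kinvinv] using kself a⁻¹
  inv_unique a b h1 h2 := by
    have i1 := sub_inv b.2.2 (kext.1 h2)
    have i2 := sub_inv a.2.2 (kext.1 h1)
    refine kext.2 (Set.Subset.antisymm i1 ?_)
    have := Set.image_mono (f := arrInv) i2
    change setInv a.val ⊆ setInv (setInv b.val) at this
    rwa [setInv_setInv] at this
  zero_mul a := kext.2 (by
    ext z; constructor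
    · rintro ⟨x, hx, _⟩; exact hx.elim
    · intro h; exact h.elim)
  mul_zero a := kext.2 (by
    ext z; constructor
    · rintro ⟨x, hx, y, hy, _⟩; exact hy.elim
    · intro h; exact h.elim)
  exists_ne_zero := by
    obtain ⟨a⟩ := ‹Nonempty Ob›
    refine ⟨⟨{idA a}, Set.finite_singleton _, ?_⟩, ?_⟩
    · rintro x rfl y rfl
      exact ⟨fun _ => rfl, fun _ => rfl⟩
    · intro h
      exact Set.singleton_ne_empty _ (kext.1 h)
  compat_join a b h := by
    refine ⟨⟨a.val ∪ b.val, a.2.1.union b.2.1,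
      union_bis a.2.2 b.2.2 (kidem.1 h.1) (kidem.1 h.2)⟩, kjoin.2 rfl⟩
  mul_join a b j c h := by
    rw [kjoin] at *
    rw [kmul_val, h, setMul_union]; rfl
  join_mul a b j c h := by
    rw [kjoin] at *
    rw [kmul_val, h, union_setMul]; rfl
  relcomp e f he hf hfe := by
    rw [kidem] at he hf
    rw [knle] at hfe
    refine ⟨⟨e.val \ f.val, e.2.1.subset Set.sdiff_subset, bis_mono Set.sdiff_subset e.2.2⟩,
      kidem.2 (Set.sdiff_subset.trans he), knle.2 Set.sdiff_subset, ?_, kjoin.2 ?_⟩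
    · refine kext.2 (Set.eq_empty_of_forall_notMem ?_)
      rintro z ⟨x, hx, y, hy, h⟩
      obtain ⟨a, rfl⟩ := he hx.1
      obtain ⟨b, rfl⟩ := hf hy
      have e : a = b := h.mid
      subst e
      exact hx.2 hy
    · exact (Set.union_sdiff_cancel hfe).symm

end Helpers

/-- For a (nonempty) discrete groupoid `G`, the set `K_fin(G)` of finite local
bisections, under the setwise product, setwise inverse, and with the empty set as
zero, is a Boolean inverse semigroup whose idempotents are exactly the finite
subsets of the set of identities of `G`. -/
theorem Kfin_booleanInverseSemigroup (Ob : Type u) [Groupoid.{v} Ob] [Nonempty Ob] :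
    ∃ (m : Mul (Kfin Ob)) (z : Zero (Kfin Ob)) (i : Inv (Kfin Ob)),
      (∀ A B : Kfin Ob, (m.mul A B).val = setMul A.val B.val) ∧
      (z.zero.val = (∅ : Set (Arr Ob))) ∧
      (∀ A : Kfin Ob, (i.inv A).val = setInv A.val) ∧
      (@IsBooleanInverseSemigroup (Kfin Ob) m z i) ∧
      (∀ A : Kfin Ob, @idem (Kfin Ob) m A ↔ A.val ⊆ identityArrs Ob) := by
  exact ⟨kMul, kZero, kInv, fun _ _ => rfl, rfl, fun _ => rfl, kBool, fun _ => kidem⟩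

end Paper
end

section
/- Let S be an inverse semigroup with zero. Then S is a Boolean inverse semigroup if and only if: S has all binary orthogonal joins, multiplication distributes over binary orthogonal joins, and the semilattice of idempotents of S forms a generalized Boolean algebra with respect to the natural partial order. -/
namespace Paper

variable {S : Type*} [Mul S] [Zero S] [Inv S]

/-- `j` is the least upper bound of the idempotents `e, f` within the poset of
idempotents (and is itself idempotent). -/
def isJoinIdem {S : Type*} [Mul S] [Inv S] (e f j : S) : Prop :=
  idem j ∧ nle e j ∧ nle f j ∧ ∀ c : S, idem c → nle e c → nle f c → nle j c

section Aux
variable {S : Type*} [Mul S] [Zero S] [Inv S] [IsInverseSemigroup S]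

theorem idem_inv {e : S} (h : idem e) : e⁻¹ = e := by
  have h' : e * e = e := h
  exact (IsInverseSemigroup.inv_unique e e (by rw [h', h']) (by rw [h', h'])).symm

theorem inv_inv' (a : S) : a⁻¹⁻¹ = a :=
  (IsInverseSemigroup.inv_unique a⁻¹ a (IsInverseSemigroup.inv_mul_inv a) (IsInverseSemigroup.mul_inv_mul a)).symm

theorem idem_mul {e f : S} (he : idem e) (hf : idem f) : idem (e * f) := by
  have he' : ∀ x : S, e * (e * x) = e * x := fun x => by rw [← IsInverseSemigroup.mul_assoc, he]
  have hf' : ∀ x : S, f * (f * x) = f * x := fun x => by rw [← IsInverseSemigroup.mul_assoc, hf]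
  have h1 := IsInverseSemigroup.mul_inv_mul (e * f)
  have h2 := IsInverseSemigroup.inv_mul_inv (e * f)
  generalize hx : (e * f)⁻¹ = x at h1 h2
  have h3 : f * x * e = x := by
    rw [← hx]
    apply IsInverseSemigroup.inv_unique
    · rw [hx]; simp only [IsInverseSemigroup.mul_assoc, he', hf'] at h1 ⊢; exact h1
    · rw [hx]; simp only [IsInverseSemigroup.mul_assoc, he', hf'] at h2 ⊢
      have := congrArg (fun t => f * (t * e)) h2
      simpa only [IsInverseSemigroup.mul_assoc] using this
  have h4 : idem x := by
    show x * x = x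
    have := congrArg (fun t => f * (t * e)) h2
    simp only [IsInverseSemigroup.mul_assoc] at this h3
    rw [h3] at this
    calc x * x = (f * (x * e)) * x := by rw [h3]
      _ = x := by simpa only [IsInverseSemigroup.mul_assoc] using this
  have h5 : e * f = x := by
    rw [← inv_inv' (e * f), hx, idem_inv h4]
  rw [h5]; exact h4

theorem idem_comm {e f : S} (he : idem e) (hf : idem f) : e * f = f * e := by
  have he' : ∀ x : S, e * (e * x) = e * x := fun x => by rw [← IsInverseSemigroup.mul_assoc, he]
  have hf' : ∀ x : S, f * (f * x) = f * x := fun x => by rw [← IsInverseSemigroup.mul_assoc, hf]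
  have h1 : e * f * (e * f) = e * f := idem_mul he hf
  have h2 : f * e * (f * e) = f * e := idem_mul hf he
  have : f * e = (e * f)⁻¹ := by
    apply IsInverseSemigroup.inv_unique
    · simp only [IsInverseSemigroup.mul_assoc, he', hf'] at h1 ⊢; exact h1
    · simp only [IsInverseSemigroup.mul_assoc, he', hf'] at h2 ⊢; exact h2
  rw [this, idem_inv (idem_mul he hf)]

theorem idem_d (a : S) : idem (a⁻¹ * a) := by
  show a⁻¹ * a * (a⁻¹ * a) = _
  rw [← IsInverseSemigroup.mul_assoc, IsInverseSemigroup.inv_mul_inv]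

theorem idem_r (a : S) : idem (a * a⁻¹) := by
  show a * a⁻¹ * (a * a⁻¹) = _
  rw [← IsInverseSemigroup.mul_assoc, IsInverseSemigroup.mul_inv_mul]

theorem mul_inv' (a b : S) : (a * b)⁻¹ = b⁻¹ * a⁻¹ := by
  symm
  have hc : b * b⁻¹ * (a⁻¹ * a) = a⁻¹ * a * (b * b⁻¹) := idem_comm (idem_r b) (idem_d a)
  apply IsInverseSemigroup.inv_unique
  · calc a * b * (b⁻¹ * a⁻¹) * (a * b) = a * (b * b⁻¹ * (a⁻¹ * a)) * b := by simp only [IsInverseSemigroup.mul_assoc]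
      _ = (a * a⁻¹ * a) * (b * b⁻¹ * b) := by rw [hc]; simp only [IsInverseSemigroup.mul_assoc]
      _ = a * b := by rw [IsInverseSemigroup.mul_inv_mul, IsInverseSemigroup.mul_inv_mul]
  · calc b⁻¹ * a⁻¹ * (a * b) * (b⁻¹ * a⁻¹) = b⁻¹ * (a⁻¹ * a * (b * b⁻¹)) * a⁻¹ := by
          simp only [IsInverseSemigroup.mul_assoc]
      _ = (b⁻¹ * b * b⁻¹) * (a⁻¹ * a * a⁻¹) := by rw [← hc]; simp only [IsInverseSemigroup.mul_assoc]
      _ = b⁻¹ * a⁻¹ := by rw [IsInverseSemigroup.inv_mul_inv, IsInverseSemigroup.inv_mul_inv]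

theorem idem_conj {e : S} (he : idem e) (a : S) : idem (a * e * a⁻¹) := by
  have h : e * (a⁻¹ * a) = a⁻¹ * a * e := idem_comm he (idem_d a)
  have he : e * e = e := he
  show a * e * a⁻¹ * (a * e * a⁻¹) = _
  calc a * e * a⁻¹ * (a * e * a⁻¹) = a * (e * (a⁻¹ * a)) * e * a⁻¹ := by simp only [IsInverseSemigroup.mul_assoc]
    _ = (a * a⁻¹ * a) * (e * e) * a⁻¹ := by rw [h]; simp only [IsInverseSemigroup.mul_assoc]
    _ = _ := by rw [IsInverseSemigroup.mul_inv_mul, he]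

theorem mul_idem_swap {e : S} (he : idem e) (a : S) : a * e = a * e * a⁻¹ * a := by
  have h : e * (a⁻¹ * a) = a⁻¹ * a * e := idem_comm he (idem_d a)
  calc a * e = a * a⁻¹ * a * e := by rw [IsInverseSemigroup.mul_inv_mul]
    _ = a * (a⁻¹ * a * e) := by simp only [IsInverseSemigroup.mul_assoc]
    _ = _ := by rw [← h]; simp only [IsInverseSemigroup.mul_assoc]

theorem nle_of_right {e : S} (he : idem e) (b : S) : nle (b * e) b := by
  have h : e * (b⁻¹ * b) = b⁻¹ * b * e := idem_comm he (idem_d b)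
  have he' : e * e = e := he
  show b * e = b * (b * e)⁻¹ * (b * e)
  rw [mul_inv', idem_inv he]
  calc b * e = (b * b⁻¹ * b) * (e * e) := by rw [IsInverseSemigroup.mul_inv_mul, he']
    _ = b * (b⁻¹ * b * e) * e := by simp only [IsInverseSemigroup.mul_assoc]
    _ = _ := by rw [← h]; simp only [IsInverseSemigroup.mul_assoc]

theorem nle_iff_right {a b : S} : nle a b ↔ ∃ e, idem e ∧ a = b * e := by
  constructor
  · intro h; exact ⟨a⁻¹ * a, idem_d a, by rw [← IsInverseSemigroup.mul_assoc]; exact h⟩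
  · rintro ⟨e, he, rfl⟩; exact nle_of_right he b

theorem nle_of_left {e : S} (he : idem e) (b : S) : nle (e * b) b := by
  have h := mul_idem_swap he b⁻¹
  rw [inv_inv'] at h
  have h2 : idem (b⁻¹ * e * b) := by simpa [inv_inv'] using idem_conj he b⁻¹
  refine nle_iff_right.2 ⟨b⁻¹ * e * b, h2, ?_⟩
  have hc : e * (b * b⁻¹) = b * b⁻¹ * e := idem_comm he (idem_r b)
  calc e * b = e * (b * b⁻¹ * b) := by rw [IsInverseSemigroup.mul_inv_mul]
    _ = e * (b * b⁻¹) * b := by simp only [IsInverseSemigroup.mul_assoc]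
    _ = _ := by rw [hc]; simp only [IsInverseSemigroup.mul_assoc]

theorem nle_iff_left {a b : S} : nle a b ↔ ∃ e, idem e ∧ a = e * b := by
  constructor
  · intro h
    obtain ⟨e, he, rfl⟩ := nle_iff_right.1 h
    exact ⟨_, idem_conj he b, mul_idem_swap he b⟩
  · rintro ⟨e, he, rfl⟩; exact nle_of_left he b

theorem nle_refl' (a : S) : nle a a := (IsInverseSemigroup.mul_inv_mul a).symm

theorem nle_trans' {a b c : S} (h : nle a b) (h' : nle b c) : nle a c := by
  obtain ⟨e, he, rfl⟩ := nle_iff_right.1 h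
  obtain ⟨f, hf, rfl⟩ := nle_iff_right.1 h'
  exact nle_iff_right.2 ⟨f * e, idem_mul hf he, IsInverseSemigroup.mul_assoc _ _ _⟩

theorem nle_antisymm' {a b : S} (h : nle a b) (h' : nle b a) : a = b := by
  obtain ⟨e, he, h1⟩ := nle_iff_right.1 h
  obtain ⟨f, hf, h2⟩ := nle_iff_right.1 h'
  have he' : e * e = e := he
  have h3 : a * e = a := by rw [h1, IsInverseSemigroup.mul_assoc, he']
  have : b * e = b := by rw [h2, IsInverseSemigroup.mul_assoc, idem_comm hf he, ← IsInverseSemigroup.mul_assoc, h3]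
  rw [h1, this]

theorem nle_mul_left {a b : S} (c : S) (h : nle a b) : nle (c * a) (c * b) := by
  obtain ⟨e, he, rfl⟩ := nle_iff_right.1 h
  rw [← IsInverseSemigroup.mul_assoc]; exact nle_of_right he _

theorem nle_mul_right {a b : S} (c : S) (h : nle a b) : nle (a * c) (b * c) := by
  obtain ⟨e, he, rfl⟩ := nle_iff_left.1 h
  rw [IsInverseSemigroup.mul_assoc]; exact nle_of_left he _

theorem nle_inv {a b : S} (h : nle a b) : nle a⁻¹ b⁻¹ := by
  obtain ⟨e, he, rfl⟩ := nle_iff_left.1 h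
  rw [mul_inv', idem_inv he]; exact nle_of_right he _

theorem idem_of_nle {a e : S} (he : idem e) (h : nle a e) : idem a := by
  obtain ⟨f, hf, rfl⟩ := nle_iff_right.1 h
  exact idem_mul he hf

theorem idem_mul_of_nle {e j : S} (he : idem e) (h : nle e j) : j * e = e := by
  have h : e = j * e⁻¹ * e := h
  have he' : e * e = e := he
  rw [idem_inv he, IsInverseSemigroup.mul_assoc, he'] at h
  exact h.symm

theorem join_unique {a b j k : S} (h : isJoin a b j) (h' : isJoin a b k) : j = k :=
  nle_antisymm' (h.2.2 _ h'.1 h'.2.1) (h'.2.2 _ h.1 h.2.1)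

theorem join_inv {a b j : S} (h : isJoin a b j) : isJoin a⁻¹ b⁻¹ j⁻¹ := by
  refine ⟨nle_inv h.1, nle_inv h.2.1, fun c h1 h2 => ?_⟩
  have := nle_inv (h.2.2 c⁻¹ (by simpa [inv_inv'] using nle_inv h1)
    (by simpa [inv_inv'] using nle_inv h2))
  rwa [inv_inv'] at this

theorem join_idem {e f j : S} (he : idem e) (hf : idem f) (h : isJoin e f j)
    (hd : ∀ c : S, isJoin (c * e) (c * f) (c * j)) : idem j := by
  have h2 := hd j
  rw [idem_mul_of_nle he h.1, idem_mul_of_nle hf h.2.1] at h2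
  exact join_unique h2 h

theorem isJoin.toIdem {e f j : S} (hj : idem j) (h : isJoin e f j) : isJoinIdem e f j :=
  ⟨hj, h.1, h.2.1, fun c _ => h.2.2 c⟩

theorem joinIdem_unique {a b j k : S} (h : isJoinIdem a b j) (h' : isJoinIdem a b k) : j = k :=
  nle_antisymm' (h.2.2.2 _ h'.1 h'.2.1 h'.2.2.1) (h'.2.2.2 _ h.1 h.2.1 h.2.2.1)

theorem idem_compat {e f : S} (he : idem e) (hf : idem f) : compat e f := by
  refine ⟨?_, ?_⟩
  · rw [idem_inv he]; exact idem_mul he hf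
  · rw [idem_inv hf]; exact idem_mul he hf

theorem orth_compat {e f : S} (h : orth e f) : compat e f := by
  refine ⟨?_, ?_⟩
  · rw [h.1]; exact IsInverseSemigroup.zero_mul 0
  · rw [h.2]; exact IsInverseSemigroup.zero_mul 0

theorem compat_of_nle {a b j : S} (h : nle a j) (h' : nle b j) : compat a b := by
  refine ⟨idem_of_nle (idem_d j) ?_, idem_of_nle (idem_r j) ?_⟩
  · exact nle_trans' (nle_mul_right _ (nle_inv h)) (nle_mul_left _ h')
  · exact nle_trans' (nle_mul_right _ h) (nle_mul_left _ (nle_inv h'))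

/-- key decomposition -/
theorem decomp
    (H1 : ∀ a b : S, orth a b → ∃ j, isJoin a b j)
    (H2 : ∀ a b j c : S, orth a b → isJoin a b j → isJoin (c * a) (c * b) (c * j))
    (H6 : ∀ e f : S, idem e → idem f → nle f e →
          ∃ g : S, idem g ∧ nle g e ∧ g * f = 0 ∧ isJoin f g e)
    (a b : S) (h : compat a b) :
    ∃ b' j, orth a b' ∧ nle b' b ∧ isJoin a b' j ∧ isJoin a b j := by
  have he := idem_d a
  have hf := idem_d b
  have hae : a * (a⁻¹ * a) = a := by rw [← IsInverseSemigroup.mul_assoc, IsInverseSemigroup.mul_inv_mul]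
  have hea : a⁻¹ * a * a⁻¹ = a⁻¹ := IsInverseSemigroup.inv_mul_inv a
  have hbf : b * (b⁻¹ * b) = b := by rw [← IsInverseSemigroup.mul_assoc, IsInverseSemigroup.mul_inv_mul]
  have hbe : nle (b * (a⁻¹ * a)) a := by
    rw [← IsInverseSemigroup.mul_assoc]
    have : idem (b * a⁻¹) := by
      have h3 := h.2
      rw [← idem_inv h3, mul_inv', inv_inv'] at h3
      exact h3
    exact nle_of_left this a
  generalize a⁻¹ * a = e at he hae hea hbe
  generalize b⁻¹ * b = f at hf hbf
  have hef := idem_mul he hf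
  obtain ⟨g, hg, hgf, hg0, hj⟩ := H6 f (e * f) hf hef (nle_of_left he f)
  have hfg : f * g = g := idem_mul_of_nle hg hgf
  have heg : e * g = 0 := by
    rw [← hg0, idem_comm hg hef, IsInverseSemigroup.mul_assoc, hfg]
  have ho : orth a (b * g) := by
    constructor
    · have : a⁻¹ * b = a⁻¹ * b * e := by
        rw [idem_comm h.1 he, ← IsInverseSemigroup.mul_assoc, hea]
      rw [← IsInverseSemigroup.mul_assoc, this, IsInverseSemigroup.mul_assoc, heg, IsInverseSemigroup.mul_zero]
    · rw [mul_inv', idem_inv hg, ← IsInverseSemigroup.mul_assoc]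
      have : a * g = 0 := by rw [← hae, IsInverseSemigroup.mul_assoc, heg, IsInverseSemigroup.mul_zero]
      rw [this, IsInverseSemigroup.zero_mul]
  obtain ⟨j, hjj⟩ := H1 _ _ ho
  have hb' : nle (b * g) b := nle_of_right hg b
  refine ⟨b * g, j, ho, hb', hjj, hjj.1, ?_, fun c h1 h2 => hjj.2.2 c h1 (nle_trans' hb' h2)⟩
  have ho2 : orth (e * f) g := by
    have : e * f * g = 0 := by rw [idem_comm hef hg, hg0]
    constructor
    · rw [idem_inv hef, this]
    · rw [idem_inv hg, this]
  have h3 := H2 _ _ _ b ho2 hj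
  rw [hbf] at h3
  refine h3.2.2 j ?_ hjj.2.1
  refine nle_trans' ?_ hjj.1
  rw [← IsInverseSemigroup.mul_assoc]
  exact nle_trans' (nle_of_right hf _) hbe

end Aux

/-- An inverse semigroup with zero (not the zero semigroup) is a Boolean inverse
semigroup iff it has all binary orthogonal joins, multiplication distributes over
binary orthogonal joins, and the semilattice of idempotents forms a generalized
Boolean algebra with respect to the natural partial order (binary joins of
idempotents exist, are distributed over by meets, and relative complements exist). -/
theorem booleanInverseSemigroup_iff_orthogonal {S : Type*} [Mul S] [Zero S] [Inv S]
    [IsInverseSemigroup S] (hnz : ∃ a : S, a ≠ 0) :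
    IsBooleanInverseSemigroup S ↔
      ((∀ a b : S, orth a b → ∃ j, isJoin a b j) ∧
       (∀ a b j c : S, orth a b → isJoin a b j → isJoin (c * a) (c * b) (c * j)) ∧
       (∀ a b j c : S, orth a b → isJoin a b j → isJoin (a * c) (b * c) (j * c)) ∧
       (∀ e f : S, idem e → idem f → ∃ j, isJoinIdem e f j) ∧
       (∀ e f g j : S, idem e → idem f → idem g → isJoinIdem f g j →
          isJoinIdem (e * f) (e * g) (e * j)) ∧
       (∀ e f : S, idem e → idem f → nle f e →
          ∃ g : S, idem g ∧ nle g e ∧ g * f = 0 ∧ isJoinIdem f g e)) := by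
  constructor
  · intro hB
    have hidem : ∀ e f j : S, idem e → idem f → isJoin e f j → idem j := fun e f j he hf h =>
      join_idem he hf h (fun c => hB.mul_join _ _ _ _ h)
    refine ⟨fun a b h => hB.compat_join a b (orth_compat h),
      fun a b j c _ h => hB.mul_join a b j c h, fun a b j c _ h => hB.join_mul a b j c h,
      fun e f he hf => ?_, fun e f g j he hf hg h => ?_, fun e f he hf h => ?_⟩
    · obtain ⟨j, hj⟩ := hB.compat_join e f (idem_compat he hf)
      exact ⟨j, hj.toIdem (hidem e f j he hf hj)⟩
    · obtain ⟨k, hk⟩ := hB.compat_join f g (idem_compat hf hg)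
      have hki := hidem f g k hf hg hk
      have : j = k := joinIdem_unique h (hk.toIdem hki)
      subst this
      exact (hB.mul_join _ _ _ e hk).toIdem (idem_mul he hki)
    · obtain ⟨g, h1, h2, h3, h4⟩ := hB.relcomp e f he hf h
      exact ⟨g, h1, h2, h3, h4.toIdem he⟩
  · rintro ⟨H1, H2, H3, -, -, H6⟩
    have H6' : ∀ e f : S, idem e → idem f → nle f e →
          ∃ g : S, idem g ∧ nle g e ∧ g * f = 0 ∧ isJoin f g e := by
      intro e f he hf h
      obtain ⟨g, h1, h2, h3, h4⟩ := H6 e f he hf h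
      refine ⟨g, h1, h2, h3, ?_⟩
      have ho : orth f g := by
        have : f * g = 0 := by rw [idem_comm hf h1, h3]
        constructor
        · rw [idem_inv hf, this]
        · rw [idem_inv h1, this]
      obtain ⟨k, hk⟩ := H1 f g ho
      have hki := join_idem hf h1 hk (fun c => H2 _ _ _ _ ho hk)
      have : e = k := joinIdem_unique h4 (hk.toIdem hki)
      rw [this]; exact hk
    refine { exists_ne_zero := hnz, compat_join := ?_, mul_join := ?_, join_mul := ?_,
             relcomp := H6' }
    · intro a b h
      obtain ⟨_, j, _, _, _, hj⟩ := decomp H1 H2 H6' a b h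
      exact ⟨j, hj⟩
    · intro a b j c h
      obtain ⟨b', k, ho, hb, hk, hk'⟩ := decomp H1 H2 H6' a b (compat_of_nle h.1 h.2.1)
      have : j = k := join_unique h hk'
      subst this
      exact ⟨nle_mul_left c h.1, nle_mul_left c h.2.1, fun d h1 h2 =>
        (H2 _ _ _ c ho hk).2.2 d h1 (nle_trans' (nle_mul_left c hb) h2)⟩
    · intro a b j c h
      obtain ⟨b', k, ho, hb, hk, hk'⟩ := decomp H1 H2 H6' a b (compat_of_nle h.1 h.2.1)
      have : j = k := join_unique h hk'
      subst this
      exact ⟨nle_mul_right c h.1, nle_mul_right c h.2.1, fun d h1 h2 =>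
        (H3 _ _ _ c ho hk).2.2 d h1 (nle_trans' (nle_mul_right c hb) h2)⟩

end Paper
end

section
/- Let 𝒢 be a connected discrete groupoid. Then 𝒢 is isomorphic to X × G × X for some group G and nonempty set X (with product (x, g, y)(y, h, z) = (x, gh, z)), and the Boolean inverse semigroup K_fin(𝒢) of finite local bisections of 𝒢 is isomorphic to the Boolean inverse semigroup M_{|X|}(G⁰) of |X| × |X| generalized rook matrices over G⁰. -/
namespace Paper

variable {S : Type*} [Mul S] [Zero S] [Inv S]

open CategoryTheory

universe u v

/-- An `X × X` generalized rook matrix over `G⁰` (`G` with a zero adjoined):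
finitely many nonzero entries, and any two entries in the same row (resp. column)
lying in distinct columns (resp. rows) have orthogonal ranges (resp. domains). -/
def IsRook {X : Type*} {G : Type*} [Group G] (M : X → X → WithZero G) : Prop :=
  Set.Finite {p : X × X | M p.1 p.2 ≠ 0} ∧
  (∀ i j k : X, j ≠ k → (M i j)⁻¹ * M i k = 0) ∧
  (∀ i j k : X, i ≠ j → M i k * (M j k)⁻¹ = 0)

open Classical in
/-- The product of rook matrices: `(A B)_{i j} = ⊕ₖ A_{i k} B_{k j}` (for rook
matrices, at most one summand is nonzero). -/
noncomputable def rookMul {X : Type*} {G : Type*} [Group G]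
    (A B : X → X → WithZero G) : X → X → WithZero G := fun i j =>
  if h : ∃ k, A i k * B k j ≠ 0 then A i h.choose * B h.choose j else 0

/-- `tripleComp x y z` says that, in the groupoid `X × G × X` with product
`(x, g, y)(y, h, z) = (x, g h, z)`, the elements `x` and `y` are composable with
product `z`. -/
def tripleComp {X : Type*} {G : Type*} [Group G] (x y z : X × G × X) : Prop :=
  x.2.2 = y.1 ∧ z = (x.1, x.2.1 * y.2.1, y.2.2)

/-- Two entries of a rook row agree. -/
theorem wz_inv_mul {G : Type*} [Group G] {a b : WithZero G} : a⁻¹ * b = 0 ↔ a = 0 ∨ b = 0 := by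
  simp [mul_eq_zero]

theorem wz_mul_inv {G : Type*} [Group G] {a b : WithZero G} : a * b⁻¹ = 0 ↔ a = 0 ∨ b = 0 := by
  simp [mul_eq_zero]

theorem wz_ext {G : Type*} {a b : WithZero G} (h : ∀ g : G, a = g ↔ b = g) : a = b := by
  induction a using WithZero.recZeroCoe with
  | zero =>
    induction b using WithZero.recZeroCoe with
    | zero => rfl
    | coe b => exact (h b).2 rfl
  | coe a => exact ((h a).1 rfl).symm

theorem wz_mul_coe {G : Type*} [Group G] {a b : WithZero G} {g : G} :
    a * b = g ↔ ∃ x y : G, a = x ∧ b = y ∧ x * y = g := by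
  constructor
  · intro h
    induction a using WithZero.recZeroCoe with
    | zero => simp at h
    | coe a =>
      induction b using WithZero.recZeroCoe with
      | zero => simp at h
      | coe b => exact ⟨a, b, rfl, rfl, by exact_mod_cast h⟩
  · rintro ⟨x, y, rfl, rfl, rfl⟩
    simp

theorem rookMul_spec {X G : Type*} [Group G] {A B : X → X → WithZero G} (hA : IsRook A)
    (i j : X) (g : G) :
    rookMul A B i j = g ↔ ∃ k, ∃ x y : G, A i k = x ∧ B k j = y ∧ x * y = g := by
  simp only [← wz_mul_coe]
  unfold rookMul
  split_ifs with h
  · constructor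
    · intro h'
      exact ⟨_, h'⟩
    · rintro ⟨k, hk⟩
      have h1 := h.choose_spec
      have : h.choose = k := by
        by_contra hne
        rcases wz_inv_mul.1 (hA.2.1 i _ _ hne) with h2 | h2
        · exact h1 (by rw [h2, zero_mul])
        · simp [h2] at hk
      rw [this]; exact hk
  · constructor
    · intro h'; simp at h'
    · rintro ⟨k, hk⟩
      exact absurd ⟨k, by rw [hk]; simp⟩ h

open Classical in
/-- The matrix of a subset of `X × G × X`. -/
noncomputable def toMat {X G : Type*} (T : Set (X × G × X)) : X → X → WithZero G := fun i j =>
  if h : ∃ g : G, (i, g, j) ∈ T then (h.choose : G) else 0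

theorem toMat_spec {X G : Type*} {T : Set (X × G × X)}
    (hT : ∀ x ∈ T, ∀ y ∈ T, (x.2.2 = y.2.2 → x = y) ∧ (x.1 = y.1 → x = y)) (i j : X) (g : G) :
    toMat T i j = g ↔ (i, g, j) ∈ T := by
  unfold toMat
  split_ifs with h
  · have h1 := h.choose_spec
    rw [WithZero.coe_inj]
    constructor
    · intro h2; rw [← h2]; exact h1
    · intro h2
      have := (hT _ h1 _ h2).2 rfl
      simpa using this
  · constructor
    · intro h'; simp at h'
    · intro h'; exact absurd ⟨g, h'⟩ h

theorem wz_ne {G : Type*} {a : WithZero G} (h : a ≠ 0) : ∃ g : G, a = g := by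
  obtain ⟨g, hg⟩ := WithZero.ne_zero_iff_exists.1 h
  exact ⟨g, hg.symm⟩

theorem toMat_rook {X G : Type*} [Group G] {T : Set (X × G × X)} (hf : T.Finite)
    (hT : ∀ x ∈ T, ∀ y ∈ T, (x.2.2 = y.2.2 → x = y) ∧ (x.1 = y.1 → x = y)) :
    IsRook (toMat T) := by
  refine ⟨?_, ?_, ?_⟩
  · refine (hf.image (fun t => (t.1, t.2.2))).subset ?_
    rintro ⟨i, j⟩ h
    obtain ⟨g, hg⟩ := wz_ne h
    exact ⟨_, (toMat_spec hT _ _ _).1 hg, rfl⟩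
  · intro i j k hjk
    rw [wz_inv_mul]
    by_contra! h
    obtain ⟨g, hg⟩ := wz_ne h.1
    obtain ⟨g', hg'⟩ := wz_ne h.2
    rw [toMat_spec hT] at hg hg'
    have := (hT _ hg _ hg').2 rfl
    simp_all
  · intro i j k hjk
    rw [wz_mul_inv]
    by_contra! h
    obtain ⟨g, hg⟩ := wz_ne h.1
    obtain ⟨g', hg'⟩ := wz_ne h.2
    rw [toMat_spec hT] at hg hg'
    have := (hT _ hg _ hg').1 rfl
    simp_all

theorem rook_set {X G : Type*} [Group G] {M : X → X → WithZero G} (hM : IsRook M) :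
    Set.Finite {t : X × G × X | M t.1 t.2.2 = t.2.1} ∧
    ∀ x ∈ {t : X × G × X | M t.1 t.2.2 = t.2.1}, ∀ y ∈ {t : X × G × X | M t.1 t.2.2 = t.2.1},
      (x.2.2 = y.2.2 → x = y) ∧ (x.1 = y.1 → x = y) := by
  constructor
  · refine Set.Finite.of_finite_image (f := fun t => (t.1, t.2.2)) (hM.1.subset ?_) ?_
    · rintro _ ⟨⟨i, g, j⟩, h, rfl⟩
      simp only [Set.mem_setOf_eq] at h ⊢
      rw [h]; simp
    · rintro ⟨i, g, j⟩ h ⟨i', g', j'⟩ h' he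
      simp only [Set.mem_setOf_eq, Prod.mk.injEq] at h h' he
      obtain ⟨rfl, rfl⟩ := he
      rw [h, WithZero.coe_inj] at h'
      rw [h']
  · rintro ⟨i, g, j⟩ h ⟨i', g', j'⟩ h'
    simp only [Set.mem_setOf_eq] at h h' ⊢
    constructor
    · rintro rfl
      have : i = i' := by
        by_contra hne
        rcases wz_mul_inv.1 (hM.2.2 i i' j hne) with h2 | h2
        · simp [h2] at h
        · simp [h2] at h'
      subst this
      rw [h, WithZero.coe_inj] at h'
      rw [h']
    · rintro rfl
      have : j = j' := by
        by_contra hne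
        rcases wz_inv_mul.1 (hM.2.1 i j j' hne) with h2 | h2
        · simp [h2] at h
        · simp [h2] at h'
      subst this
      rw [h, WithZero.coe_inj] at h'
      rw [h']

theorem main_aux {Ob : Type u} [Groupoid.{v} Ob] {G X : Type*} [Group G]
    (φ : Arr Ob → X × G × X) (hφ : Function.Bijective φ)
    (hcomp : ∀ x y z : Arr Ob, IsComp x y z ↔ tripleComp (φ x) (φ y) (φ z))
    (hd : ∀ x y : Arr Ob, x.1 = y.1 ↔ (φ x).2.2 = (φ y).2.2)
    (hr : ∀ x y : Arr Ob, x.2.1 = y.2.1 ↔ (φ x).1 = (φ y).1) :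
    ∃ Φ : Kfin Ob → {M : X → X → WithZero G // IsRook M},
        Function.Bijective Φ ∧
        (∀ A B : Kfin Ob, ∃ C : Kfin Ob, C.val = setMul A.val B.val) ∧
        (∀ A B C : Kfin Ob, C.val = setMul A.val B.val →
          (Φ C).val = rookMul (Φ A).val (Φ B).val) := by
  have hT : ∀ A : Kfin Ob, ∀ x ∈ φ '' A.val, ∀ y ∈ φ '' A.val,
      (x.2.2 = y.2.2 → x = y) ∧ (x.1 = y.1 → x = y) := by
    rintro A _ ⟨x, hx, rfl⟩ _ ⟨y, hy, rfl⟩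
    have := A.2.2 x hx y hy
    rw [hd, hr] at this
    exact ⟨fun h => congrArg φ (this.1 h), fun h => congrArg φ (this.2 h)⟩
  refine ⟨fun A => ⟨toMat (φ '' A.val), toMat_rook (A.2.1.image φ) (hT A)⟩, ⟨?_, ?_⟩, ?_, ?_⟩
  · intro A B h
    have h1 : toMat (φ '' A.val) = toMat (φ '' B.val) := congrArg Subtype.val h
    apply Subtype.ext
    apply hφ.1.image_injective
    ext ⟨i, g, j⟩
    rw [← toMat_spec (hT A), h1, toMat_spec (hT B)]
  · rintro ⟨M, hM⟩
    obtain ⟨h1, h2⟩ := rook_set hM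
    refine ⟨⟨φ ⁻¹' {t : X × G × X | M t.1 t.2.2 = t.2.1}, h1.preimage hφ.1.injOn, ?_⟩, ?_⟩
    · intro x hx y hy
      rw [hd, hr]
      have := h2 _ hx _ hy
      exact ⟨fun h => hφ.1 (this.1 h), fun h => hφ.1 (this.2 h)⟩
    · apply Subtype.ext
      funext i j
      apply wz_ext
      intro g
      refine (toMat_spec (hT _) i j g).trans ?_
      change (i, g, j) ∈ φ '' (φ ⁻¹' {t : X × G × X | M t.1 t.2.2 = t.2.1}) ↔ _
      rw [Set.image_preimage_eq _ hφ.2]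
      rfl
  · intro A B
    refine ⟨⟨setMul A.val B.val, ?_, ?_⟩, rfl⟩
    · apply Set.Finite.of_finite_image (f := φ) _ hφ.1.injOn
      refine ((A.2.1.image2 (fun x y => ((φ x).1, (φ x).2.1 * (φ y).2.1, (φ y).2.2)) B.2.1)).subset ?_
      rintro _ ⟨z, ⟨x, hx, y, hy, h⟩, rfl⟩
      rw [hcomp] at h
      exact ⟨x, hx, y, hy, h.2.symm⟩
    · rintro z ⟨x, hx, y, hy, h⟩ z' ⟨x', hx', y', hy', h'⟩
      rw [hcomp] at h h'
      have hA := A.2.2 x hx x' hx'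
      have hB := B.2.2 y hy y' hy'
      rw [hd, hr] at hA hB ⊢
      obtain ⟨h1, h2⟩ := h
      obtain ⟨h1', h2'⟩ := h'
      constructor
      · intro he
        have e1 : y = y' := hB.1 (by simpa [h2, h2'] using he)
        subst e1
        have e2 : x = x' := hA.1 (h1.trans h1'.symm)
        subst e2
        exact hφ.1 (h2.trans h2'.symm)
      · intro he
        have e1 : x = x' := hA.2 (by simpa [h2, h2'] using he)
        subst e1
        have e2 : y = y' := hB.2 (h1.symm.trans h1')
        subst e2
        exact hφ.1 (h2.trans h2'.symm)
  · intro A B C hC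
    funext i j
    apply wz_ext
    intro g
    rw [rookMul_spec (toMat_rook (A.2.1.image φ) (hT A))]
    simp only [toMat_spec (hT _)]
    constructor
    · rintro ⟨z, hz, hzt⟩
      rw [hC] at hz
      obtain ⟨x, hx, y, hy, h⟩ := hz
      rw [hcomp] at h
      obtain ⟨h1, h2⟩ := h
      rw [hzt] at h2
      simp only [Prod.mk.injEq] at h2
      obtain ⟨rfl, rfl, rfl⟩ := h2
      exact ⟨_, _, _, ⟨x, hx, rfl⟩, ⟨y, hy, by rw [h1]⟩, rfl⟩
    · rintro ⟨k, a, b, ⟨x, hx, hxt⟩, ⟨y, hy, hyt⟩, rfl⟩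
      obtain ⟨z, hz⟩ := hφ.2 (i, a * b, j)
      refine ⟨z, ?_, hz⟩
      rw [hC]
      refine ⟨x, hx, y, hy, ?_⟩
      rw [hcomp, hxt, hyt, hz]
      exact ⟨rfl, rfl⟩

/-- A connected discrete groupoid `𝒢` is isomorphic to `X × G × X` for some group
`G` and nonempty set `X`, and `K_fin(𝒢)` is isomorphic to the Boolean inverse
semigroup `M_{|X|}(G⁰)` of `|X| × |X|` generalized rook matrices over `G⁰`. -/
theorem connected_groupoid_Kfin_iso_rook (Ob : Type u) [Groupoid.{v} Ob]
    [Nonempty Ob] (hconn : ∀ a b : Ob, Nonempty (a ⟶ b)) :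
    ∃ (G : Type (max u v)) (_ : Group G) (X : Type (max u v)) (_ : Nonempty X)
      (φ : Arr Ob → X × G × X),
      Function.Bijective φ ∧
      (∀ x y z : Arr Ob, IsComp x y z ↔ tripleComp (φ x) (φ y) (φ z)) ∧
      ∃ Φ : Kfin Ob → {M : X → X → WithZero G // IsRook M},
        Function.Bijective Φ ∧
        (∀ A B : Kfin Ob, ∃ C : Kfin Ob, C.val = setMul A.val B.val) ∧
        (∀ A B C : Kfin Ob, C.val = setMul A.val B.val →
          (Φ C).val = rookMul (Φ A).val (Φ B).val) := by
  obtain ⟨o⟩ := ‹Nonempty Ob›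
  let c : ∀ a : Ob, o ⟶ a := fun a => (hconn o a).some
  letI : Group (o ⟶ o) := Groupoid.vertexGroup o
  let φ : Arr Ob → ULift.{max u v} Ob × ULift.{max u v} (o ⟶ o)ᵐᵒᵖ × ULift.{max u v} Ob :=
    fun x => (⟨x.2.1⟩, ⟨MulOpposite.op (c x.1 ≫ x.2.2 ≫ Groupoid.inv (c x.2.1))⟩, ⟨x.1⟩)
  have hinj : Function.Injective φ := by
    rintro ⟨a, b, g⟩ ⟨a', b', g'⟩ h
    simp only [φ, Prod.mk.injEq, ULift.up.injEq, MulOpposite.op_inj] at h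
    obtain ⟨rfl, h, rfl⟩ := h
    have : g = g' := by
      have h3 := congrArg (fun t => Groupoid.inv (c a) ≫ t ≫ c b) h
      simpa using h3
    rw [this]
  have hbij : Function.Bijective φ := by
    refine ⟨hinj, ?_⟩
    rintro ⟨⟨b⟩, ⟨g⟩, ⟨a⟩⟩
    refine ⟨⟨a, b, Groupoid.inv (c a) ≫ g.unop ≫ c b⟩, ?_⟩
    simp [φ]
  have key : ∀ (a b d : Ob) (g : a ⟶ b) (h : b ⟶ d),
      tripleComp (φ ⟨b, d, h⟩) (φ ⟨a, b, g⟩) (φ ⟨a, d, g ≫ h⟩) := by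
    intro a b d g h
    refine ⟨rfl, ?_⟩
    simp only [φ, Prod.mk.injEq, true_and, and_true]
    apply ULift.ext
    apply MulOpposite.unop_injective
    change _ = (c a ≫ g ≫ Groupoid.inv (c b)) ≫ (c b ≫ h ≫ Groupoid.inv (c d))
    simp
  have hcomp : ∀ x y z : Arr Ob, IsComp x y z ↔ tripleComp (φ x) (φ y) (φ z) := by
    intro x y z
    constructor
    · rintro ⟨a, b, d, g, h, rfl, rfl, rfl⟩
      exact key a b d g h
    · obtain ⟨b, d, h⟩ := x
      obtain ⟨a, b', g⟩ := y
      intro ht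
      have hb : b = b' := congrArg ULift.down ht.1
      subst hb
      refine ⟨a, b, d, g, h, rfl, rfl, ?_⟩
      exact hinj (ht.2.trans (key a b d g h).2.symm)
  refine ⟨ULift.{max u v} (o ⟶ o)ᵐᵒᵖ, inferInstance, ULift.{max u v} Ob, ⟨⟨o⟩⟩, φ, hbij, hcomp, ?_⟩
  exact main_aux φ hbij hcomp (fun x y => by simp [φ]) (fun x y => by simp [φ])

end Paper
end
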